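/- arXiv:cs/0607028 — 2 statements merged into one kernel-verified Lean document; each statement's English description precedes it below -/
import Mathlib

section
/- The series ∑_{m=1}^{∞} m!/(m^{m+2}·ln 2) converges, and its sum S satisfies 1.6702 ≤ S ≤ 1.6703. -/
theorem aux_step (m : ℕ) (hm : 1 ≤ m) :
    (Nat.factorial (m+1) : ℝ) / (((m+1 : ℕ) : ℝ) ^ (m + 1 + 2))
      ≤ (1/2) * ((Nat.factorial m : ℝ) / ((m : ℝ) ^ (m + 2))) := by
  have hm0 : (0:ℝ) < m := by exact_mod_cast hm
  have hb : (2:ℝ) * (m:ℝ)^(m+2) ≤ ((m:ℝ)+1)^(m+2) := by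
    have h := one_add_mul_le_pow (a := 1/(m:ℝ)) (by have : 0 < 1/(m:ℝ) := by positivity
                                                    linarith) (m+2)
    have h2 : (2:ℝ) ≤ 1 + ((m+2 : ℕ):ℝ) * (1/(m:ℝ)) := by
      push_cast
      have : ((m:ℝ)+2) * (1/m) = 1 + 2/m := by field_simp
      have : 0 < 2/(m:ℝ) := by positivity
      linarith
    have h3 : ((m:ℝ)+1)^(m+2) = (1 + 1/(m:ℝ))^(m+2) * (m:ℝ)^(m+2) := by
      rw [← mul_pow]; congr 1; field_simp
    rw [h3]
    exact mul_le_mul_of_nonneg_right (h2.trans h) (by positivity)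
  have h1 : (Nat.factorial (m+1) : ℝ) / (((m+1 : ℕ) : ℝ) ^ (m + 1 + 2))
      = (Nat.factorial m : ℝ) / ((m:ℝ)+1)^(m+2) := by
    rw [Nat.factorial_succ]
    push_cast
    rw [show m + 1 + 2 = (m+2)+1 by ring, pow_succ]
    field_simp
  have h4 : (1/2) * ((Nat.factorial m : ℝ) / ((m : ℝ) ^ (m + 2)))
      = (Nat.factorial m : ℝ) / (2 * (m : ℝ) ^ (m + 2)) := by
    field_simp
  rw [h1, h4]
  exact div_le_div_of_nonneg_left (by positivity) (by positivity) hb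

theorem aux_tail (n : ℕ) :
    (Nat.factorial (n+13) : ℝ) / (((n+13 : ℕ) : ℝ) ^ (n + 13 + 2))
      ≤ ((Nat.factorial 13 : ℝ) / ((13 : ℝ) ^ 15)) * (1/2)^n := by
  induction n with
  | zero => norm_num
  | succ k ih =>
    have h := aux_step (k+13) (by omega)
    rw [show k + 1 + 13 = k + 13 + 1 by ring, pow_succ (1/2 : ℝ)]
    linarith

theorem aux_sum :
    Summable (fun m : ℕ => (Nat.factorial m : ℝ) / ((m : ℝ) ^ (m + 2))) ∧
    (1.1576945 : ℝ) ≤ ∑' m : ℕ, (Nat.factorial m : ℝ) / ((m : ℝ) ^ (m + 2)) ∧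
    ∑' m : ℕ, (Nat.factorial m : ℝ) / ((m : ℝ) ^ (m + 2)) ≤ 1.1577 := by
  have hg : HasSum (fun n : ℕ => ((Nat.factorial 13 : ℝ) / ((13 : ℝ) ^ 15)) * (1/2)^n)
      (((Nat.factorial 13 : ℝ) / ((13 : ℝ) ^ 15)) * 2) := hasSum_geometric_two.mul_left _
  have hs' : Summable (fun n : ℕ =>
      (Nat.factorial (n+13) : ℝ) / (((n+13 : ℕ) : ℝ) ^ (n + 13 + 2))) :=
    Summable.of_nonneg_of_le (fun n => by positivity) aux_tail hg.summable
  have hs : Summable (fun m : ℕ => (Nat.factorial m : ℝ) / ((m : ℝ) ^ (m + 2))) :=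
    (summable_nat_add_iff 13).1 hs'
  have ht : ∑' n : ℕ, (Nat.factorial (n+13) : ℝ) / (((n+13 : ℕ) : ℝ) ^ (n + 13 + 2))
      ≤ ((Nat.factorial 13 : ℝ) / ((13 : ℝ) ^ 15)) * 2 :=
    hg.tsum_eq ▸ hs'.tsum_le_tsum aux_tail hg.summable
  have ht0 : 0 ≤ ∑' n : ℕ, (Nat.factorial (n+13) : ℝ) / (((n+13 : ℕ) : ℝ) ^ (n + 13 + 2)) :=
    tsum_nonneg (fun n => by positivity)
  have e := hs.sum_add_tsum_nat_add 13
  refine ⟨hs, ?_, ?_⟩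
  · rw [← e]
    refine le_add_of_le_of_nonneg ?_ ht0
    norm_num [Finset.sum_range_succ, Nat.factorial]
  · rw [← e]
    refine (add_le_add_right ht _).trans ?_
    norm_num [Finset.sum_range_succ, Nat.factorial]

theorem stmt17 :
    Summable (fun m : ℕ => (Nat.factorial m : ℝ) / ((m : ℝ) ^ (m + 2) * Real.log 2)) ∧
    (1.6702 : ℝ) ≤ ∑' m : ℕ, (Nat.factorial m : ℝ) / ((m : ℝ) ^ (m + 2) * Real.log 2) ∧
    ∑' m : ℕ, (Nat.factorial m : ℝ) / ((m : ℝ) ^ (m + 2) * Real.log 2) ≤ 1.6703 := by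
  obtain ⟨hs, hl, hu⟩ := aux_sum
  have h1 := Real.log_two_gt_d9
  have h2 := Real.log_two_lt_d9
  have h0 : 0 < Real.log 2 := by linarith
  simp only [← div_div]
  refine ⟨hs.div_const _, ?_, ?_⟩
  · rw [tsum_div_const, le_div_iff₀ h0]
    linarith
  · rw [tsum_div_const, div_le_iff₀ h0]
    linarith
end

section
/- For all integers n ≥ 2 and i ≥ 1, (1/2)·C(n,2)·4^{−i}·(1 − 1/2^i)^{n−2} ≤ (n²/4^i)·exp(−n/2^i), where C(n,2) = n(n−1)/2. Moreover, for all integers n ≥ 2, C(n,2) ≥ (n²/2)·exp(−1/√n). -/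
theorem stmt19 :
    (∀ n i : ℕ, 2 ≤ n → 1 ≤ i →
      (1 / 2 : ℝ) * (n.choose 2 : ℝ) * (1 / 4 ^ i) * (1 - 1 / 2 ^ i) ^ (n - 2)
        ≤ ((n : ℝ) ^ 2 / 4 ^ i) * Real.exp (-(n : ℝ) / 2 ^ i)) ∧
    (∀ n : ℕ, 2 ≤ n →
      ((n : ℝ) ^ 2 / 2) * Real.exp (-1 / Real.sqrt n) ≤ (n.choose 2 : ℝ)) := by
  constructor
  · intro n i hn hi
    obtain ⟨a, ha⟩ : ∃ a : ℝ, a = 1 / 2 ^ i := ⟨_, rfl⟩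
    have ha0 : 0 < a := by rw [ha]; positivity
    have ha1 : a ≤ 1 / 2 := by
      rw [ha]
      apply one_div_le_one_div_of_le (by norm_num)
      calc (2 : ℝ) = 2 ^ 1 := by norm_num
        _ ≤ 2 ^ i := pow_le_pow_right₀ (by norm_num) hi
    have h1 : (1 - a) ^ (n - 2) ≤ 4 * Real.exp (-(n : ℝ) / 2 ^ i) := by
      calc (1 - a) ^ (n - 2) ≤ (Real.exp (-a)) ^ (n - 2) :=
            pow_le_pow_left₀ (by linarith) (Real.one_sub_le_exp_neg a) _
        _ = Real.exp (2 * a) * Real.exp (-(n : ℝ) / 2 ^ i) := by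
            rw [← Real.exp_nat_mul, ← Real.exp_add]
            congr 1
            rw [Nat.cast_sub hn, ha]
            push_cast
            ring
        _ ≤ 4 * Real.exp (-(n : ℝ) / 2 ^ i) := by
            gcongr
            have : Real.exp (2 * a) ≤ Real.exp 1 := Real.exp_le_exp.mpr (by linarith)
            linarith [Real.exp_one_lt_d9]
    have h2 : (1 / 2 : ℝ) * (n.choose 2 : ℝ) ≤ (n : ℝ) ^ 2 / 4 := by
      rw [Nat.cast_choose_two]
      have : (0 : ℝ) ≤ n := Nat.cast_nonneg n
      nlinarith
    rw [← ha]
    calc (1 / 2 : ℝ) * (n.choose 2 : ℝ) * (1 / 4 ^ i) * (1 - a) ^ (n - 2)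
        ≤ (n : ℝ) ^ 2 / 4 * (1 / 4 ^ i) * (4 * Real.exp (-(n : ℝ) / 2 ^ i)) := by
          have : (0 : ℝ) ≤ 1 - a := by linarith
          gcongr
      _ = _ := by ring
  · intro n hn
    have hn' : (2 : ℝ) ≤ n := by exact_mod_cast hn
    have hs : 0 < Real.sqrt n := Real.sqrt_pos.mpr (by linarith)
    obtain ⟨x, hx⟩ : ∃ x : ℝ, x = 1 / Real.sqrt n := ⟨_, rfl⟩
    have hx0 : 0 < x := by rw [hx]; positivity
    have hxx : x ^ 2 = 1 / n := by
      rw [hx, div_pow, Real.sq_sqrt (by linarith), one_pow]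
    have hx2 : x ^ 2 ≤ 1 / 2 := by
      rw [hxx]; exact one_div_le_one_div_of_le (by norm_num) hn'
    have hx1 : x ≤ 0.7072 := by
      by_contra h
      push Not at h
      nlinarith
    have he : 1 + x + x ^ 2 / 2 + x ^ 3 / 6 ≤ Real.exp x := by
      have := Real.sum_le_exp_of_nonneg hx0.le 4
      simpa [Finset.sum_range_succ, Nat.factorial] using this
    have hp : 0 ≤ 1 - x / 2 - 5 * x ^ 2 / 6 - x * x ^ 2 / 2 - x ^ 2 * x ^ 2 / 6 := by
      have e1 : x * x ^ 2 ≤ 0.7072 * (1 / 2) := by gcongr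
      have e2 : x ^ 2 * x ^ 2 ≤ 1 / 2 * (1 / 2) := by gcongr
      linarith
    have hk : 1 ≤ (1 - x ^ 2) * Real.exp x := by
      have h3 : (1 - x ^ 2) * (1 + x + x ^ 2 / 2 + x ^ 3 / 6) ≤ (1 - x ^ 2) * Real.exp x :=
        mul_le_mul_of_nonneg_left he (by linarith)
      have h4 := mul_nonneg hx0.le hp
      linarith
    have hk2 : Real.exp (-x) ≤ 1 - x ^ 2 := by
      rw [Real.exp_neg, inv_le_iff_one_le_mul₀ (Real.exp_pos x)]
      exact hk
    have : -1 / Real.sqrt n = -x := by rw [hx]; ring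
    rw [this, Nat.cast_choose_two]
    calc (n : ℝ) ^ 2 / 2 * Real.exp (-x) ≤ (n : ℝ) ^ 2 / 2 * (1 - x ^ 2) := by gcongr
      _ = _ := by
        rw [hxx]
        field_simp
end
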